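/- arXiv:2604.15824 — 3 statements merged into one kernel-verified Lean document; each statement's English description precedes it below -/
import Mathlib

section
/- Let G be a 3-connected simple graph, let e be an edge of G, and let v be a vertex not incident to e. Then there exists a chordless cycle C in G − v containing e such that G − V(C) is connected. -/
/-- `G` is `k`-connected: it has more than `k` vertices and remains connected
after deleting any set of fewer than `k` vertices. -/
def IsKConnected {V : Type*} [Fintype V] (G : SimpleGraph V) (k : ℕ) : Prop :=
  k < Fintype.card V ∧ ∀ s : Set V, s.ncard < k → (G.induce sᶜ).Connected

/-- Delete the vertices of `K` (keeping them isolated) and the edge `xy`. -/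
def delJ {V : Type*} (G : SimpleGraph V) (x y : V) (K : Set V) : SimpleGraph V where
  Adj a b := G.Adj a b ∧ a ∉ K ∧ b ∉ K ∧ s(a, b) ≠ s(x, y)
  symm := ⟨fun a b h => ⟨h.1.symm, h.2.2.1, h.2.1, by rw [Sym2.eq_swap]; exact h.2.2.2⟩⟩
  loopless := ⟨fun a h => G.loopless.irrefl a h.1⟩

theorem sep_aux {V : Type*} [Fintype V] (G : SimpleGraph V)
    (hconn : IsKConnected G 3) (p q w z : V) (D : Set V)
    (hwp : w ≠ p) (hwq : w ≠ q) (hzp : z ≠ p) (hzq : z ≠ q) (hw : w ∈ D) (hz : z ∉ D) :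
    ∃ a b, a ∈ D ∧ b ∉ D ∧ G.Adj a b ∧ a ≠ p ∧ a ≠ q ∧ b ≠ p ∧ b ≠ q := by
  have hc := hconn.2 {p, q} (lt_of_le_of_lt (Set.ncard_insert_le _ _) (by simp))
  have hw' : w ∈ ({p, q} : Set V)ᶜ := by simp [hwp, hwq]
  have hz' : z ∈ ({p, q} : Set V)ᶜ := by simp [hzp, hzq]
  obtain ⟨W⟩ := hc.preconnected ⟨w, hw'⟩ ⟨z, hz'⟩
  obtain ⟨d, -, h1, h2⟩ := W.exists_boundary_dart {u | (u : V) ∈ D} hw hz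
  have ha := d.fst.2
  have hb := d.snd.2
  simp only [Set.mem_compl_iff, Set.mem_insert_iff, Set.mem_singleton_iff, not_or] at ha hb
  exact ⟨d.fst, d.snd, h1, h2, d.adj, ha.1, ha.2, hb.1, hb.2⟩

theorem seg_reach {V : Type*} (J : SimpleGraph V) (P : ℕ → V) (a b : ℕ) (hab : a ≤ b)
    (h : ∀ k, a ≤ k → k < b → J.Adj (P k) (P (k + 1))) : J.Reachable (P a) (P b) := by
  induction b, hab using Nat.le_induction with
  | base => exact SimpleGraph.Reachable.refl _
  | succ b hab ih =>
    exact (ih fun k h1 h2 => h k h1 (by omega)).trans (h b hab (by omega)).reachable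

theorem cover_aux {V : Type*} [Fintype V] (G : SimpleGraph V)
    (hconn : IsKConnected G 3) (x y v : V) (K : Set V) (hvK : v ∈ K)
    (P : ℕ → V) (n : ℕ) (hn : 0 < n) (hP0 : P 0 = x) (hPn : P n = y)
    (hinj : ∀ i j, i ≤ n → j ≤ n → P i = P j → i = j)
    (hPK : ∀ k, k ≤ n → P k ∉ K)
    (hadj : ∀ k, k < n → (delJ G x y K).Adj (P k) (P (k + 1)))
    (hch : ∀ k m, k < m → m ≤ n → (delJ G x y K).Adj (P k) (P m) → m = k + 1)
    (hmax : ∀ z c, z ∉ K → z ≠ x → z ≠ y → c ∈ K → G.Adj z c →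
      ¬ (delJ G x y (insert z K)).Reachable x y) :
    ∀ w, w ∉ K → ∃ k, k ≤ n ∧ w = P k := by
  classical
  intro w hwK
  by_contra hwP
  -- outside vertices
  let O : V → Prop := fun u => u ∉ K ∧ ∀ k, k ≤ n → u ≠ P k
  have hO : O w := ⟨hwK, fun k hk h => hwP ⟨k, hk, h⟩⟩
  let Q : SimpleGraph V :=
    { Adj := fun a b => G.Adj a b ∧ O a ∧ O b
      symm := ⟨fun a b h => ⟨h.1.symm, h.2.2, h.2.1⟩⟩
      loopless := ⟨fun a h => G.loopless.irrefl a h.1⟩ }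
  let Att : V → ℕ → Prop := fun u k => ∃ u', O u' ∧ Q.Reachable u u' ∧ G.Adj u' (P k)
  have hOne : ∀ a b, O a → s(a, b) ≠ s(x, y) := by
    intro a b ha h
    have hx := ha.2 0 (by omega)
    have hy := ha.2 n le_rfl
    rw [hP0] at hx
    rw [hPn] at hy
    rcases Sym2.eq_iff.1 h with h | h
    · exact hx h.1
    · exact hy h.1
  have hne0 : ∀ k, 0 < k → k ≤ n → P k ≠ x := fun k h1 h2 h => by
    have := hinj k 0 h2 (by omega) (h.trans hP0.symm); omega
  have hnen : ∀ k, k < n → P k ≠ y := fun k h1 h => by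
    have := hinj k n h1.le le_rfl (h.trans hPn.symm); omega
  -- segments
  have hseg : ∀ z a b, a ≤ b → b ≤ n → (∀ k, a ≤ k → k ≤ b → P k ≠ z) →
      (delJ G x y (insert z K)).Reachable (P a) (P b) := by
    intro z a b hab hbn hz
    apply seg_reach _ _ _ _ hab
    intro k h1 h2
    have h := hadj k (by omega)
    refine ⟨h.1, ?_, ?_, h.2.2.2⟩
    · simp only [Set.mem_insert_iff, not_or]; exact ⟨hz k h1 h2.le, h.2.1⟩
    · simp only [Set.mem_insert_iff, not_or]; exact ⟨hz (k+1) (by omega) (by omega), h.2.2.1⟩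
  -- rerouting
  have hre : ∀ u k m j, k < j → j < m → m ≤ n → Att u k → Att u m →
      ∀ c ∈ K, ¬ G.Adj (P j) c := by
    rintro u k m j hkj hjm hmn ⟨a, haO, hua, hak⟩ ⟨b, hbO, hub, hbm⟩ c hc hjc
    apply hmax (P j) c (hPK j (by omega)) (hne0 j (by omega) (by omega)) (hnen j (by omega)) hc hjc
    have h1 := hseg (P j) 0 k (by omega) (by omega) (fun i _ h2 h => by
      have := hinj i j (by omega) (by omega) h; omega)
    have h2 := hseg (P j) m n (by omega) (by omega) (fun i h2 h3 h => by
      have := hinj i j (by omega) (by omega) h; omega)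
    rw [hP0] at h1
    rw [hPn] at h2
    have hins : ∀ t, O t → t ∉ insert (P j) K := by
      intro t ht
      simp only [Set.mem_insert_iff, not_or]
      exact ⟨ht.2 j (by omega), ht.1⟩
    have hinsP : ∀ i, i ≤ n → i ≠ j → P i ∉ insert (P j) K := by
      intro i hi hij
      simp only [Set.mem_insert_iff, not_or]
      exact ⟨fun h => hij (hinj i j hi (by omega) h), hPK i hi⟩
    have hQ : Q ≤ delJ G x y (insert (P j) K) := by
      intro s t hst
      exact ⟨hst.1, hins s hst.2.1, hins t hst.2.2, hOne s t hst.2.1⟩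
    have hab := (hua.symm.trans hub).mono hQ
    have hA : (delJ G x y (insert (P j) K)).Adj a (P k) :=
      ⟨hak, hins a haO, hinsP k (by omega) (by omega), hOne _ _ haO⟩
    have hB : (delJ G x y (insert (P j) K)).Adj b (P m) :=
      ⟨hbm, hins b hbO, hinsP m (by omega) (by omega), hOne _ _ hbO⟩
    exact h1.trans (hA.symm.reachable.trans (hab.trans (hB.reachable.trans h2)))
  have hOK : ∀ u, O u → ∀ c ∈ K, ¬ G.Adj u c := by
    intro u hu c hc huc
    have hx := hu.2 0 (by omega)
    have hy := hu.2 n le_rfl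
    rw [hP0] at hx
    rw [hPn] at hy
    apply hmax u c hu.1 hx hy hc huc
    have := hseg u 0 n (by omega) le_rfl (fun k _ hk => (hu.2 k hk).symm)
    rwa [hP0, hPn] at this
  -- choose interval
  let T : ℕ → Prop := fun k => k = 0 ∨ k = n ∨ ∃ c ∈ K, G.Adj (P k) c
  obtain ⟨i, j, hij, hjn, hTi, hTj, hT, hwi⟩ : ∃ i j, i < j ∧ j ≤ n ∧ T i ∧ T j ∧
      (∀ k, i < k → k < j → ¬ T k) ∧ (∀ k, k ≤ n → Att w k → i ≤ k ∧ k ≤ j) := by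
    let R : ℕ → Prop := fun k => k < n ∧ T k ∧ ∀ m, m ≤ n → Att w m → k ≤ m
    have hR0 : R 0 := ⟨hn, Or.inl rfl, fun _ _ _ => Nat.zero_le _⟩
    have hRi : R (Nat.findGreatest R n) := Nat.findGreatest_spec (Nat.zero_le n) hR0
    have hRm : ∀ k, k ≤ n → R k → k ≤ Nat.findGreatest R n := fun k hk h =>
      Nat.le_findGreatest hk h
    generalize Nat.findGreatest R n = i at hRi hRm
    have hex : ∃ k, i < k ∧ T k := ⟨n, hRi.1, Or.inr (Or.inl rfl)⟩
    have hj := Nat.find_spec hex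
    have hjm : ∀ k, i < k → T k → Nat.find hex ≤ k := fun k h1 h2 => Nat.find_min' hex ⟨h1, h2⟩
    generalize Nat.find hex = j at hj hjm
    have hjn : j ≤ n := hjm n hRi.1 (Or.inr (Or.inl rfl))
    refine ⟨i, j, hj.1, hjn, hRi.2.1, hj.2, fun k h1 h2 h => ?_, fun k hk hA => ⟨hRi.2.2 k hk hA, ?_⟩⟩
    · have := hjm k h1 h; omega
    · by_contra hkj
      have hnR : ¬ R j := fun h => by have := hRm j hjn h; omega
      apply hnR
      refine ⟨by omega, hj.2, fun m hm hAm => ?_⟩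
      by_contra hmj
      rcases hj.2 with h | h | ⟨c, hc, h⟩
      · omega
      · omega
      · exact hre w m k j (by omega) (by omega) hk hAm hA c hc h
  let D : Set V := {u | (∃ k, i < k ∧ k < j ∧ u = P k) ∨
    (O u ∧ ∀ k, k ≤ n → Att u k → i ≤ k ∧ k ≤ j)}
  have hvi : ∀ k, k ≤ n → v ≠ P k := fun k hk h => hPK k hk (h ▸ hvK)
  obtain ⟨a, b, haD, hbD, hab, -, -, hbp, hbq⟩ := sep_aux G hconn (P i) (P j) w v D
    (hO.2 i (by omega)) (hO.2 j hjn) (hvi i (by omega)) (hvi j hjn) (Or.inr ⟨hO, hwi⟩) (by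
      rintro (⟨k, h1, h2, h⟩ | ⟨h, -⟩)
      · exact hvi k (by omega) h
      · exact h.1 hvK)
  apply hbD
  rcases haD with ⟨k, h1, h2, rfl⟩ | ⟨haO, haA⟩
  · by_cases hbK : b ∈ K
    · exact absurd (Or.inr (Or.inr ⟨b, hbK, hab⟩)) (hT k h1 h2)
    by_cases hbP : ∃ m, m ≤ n ∧ b = P m
    · obtain ⟨m, hm, rfl⟩ := hbP
      left
      have hJ : (delJ G x y K).Adj (P k) (P m) := by
        refine ⟨hab, hPK k (by omega), hbK, fun h => ?_⟩
        rcases Sym2.eq_iff.1 h with h | h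
        · exact hne0 k (by omega) (by omega) h.1
        · exact hnen k (by omega) h.1
      have hmi : m ≠ i := fun h => hbp (by rw [h])
      have hmj : m ≠ j := fun h => hbq (by rw [h])
      have hmk : m ≠ k := fun h => hab.ne (by rw [h])
      refine ⟨m, ?_, ?_, rfl⟩
      · by_contra hlt
        have := hch m k (by omega) (by omega) hJ.symm
        omega
      · by_contra hlt
        have := hch k m (by omega) (by omega) hJ
        omega
    · right
      have hbO : O b := ⟨hbK, fun m hm h => hbP ⟨m, hm, h⟩⟩
      have hbk : Att b k := ⟨b, hbO, SimpleGraph.Reachable.refl _, hab.symm⟩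
      refine ⟨hbO, fun m hm hA => ⟨?_, ?_⟩⟩
      · by_contra hlt
        rcases hTi with h | h | ⟨c, hc, h⟩
        · omega
        · omega
        · exact hre b m k i (by omega) (by omega) (by omega) hA hbk c hc h
      · by_contra hlt
        rcases hTj with h | h | ⟨c, hc, h⟩
        · omega
        · omega
        · exact hre b k m j (by omega) (by omega) hm hbk hA c hc h
  · by_cases hbK : b ∈ K
    · exact absurd hab (hOK a haO b hbK)
    by_cases hbP : ∃ m, m ≤ n ∧ b = P m
    · obtain ⟨m, hm, rfl⟩ := hbP
      left
      have := haA m hm ⟨a, haO, SimpleGraph.Reachable.refl _, hab⟩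
      have hmi : m ≠ i := fun h => hbp (by rw [h])
      have hmj : m ≠ j := fun h => hbq (by rw [h])
      exact ⟨m, by omega, by omega, rfl⟩
    · right
      have hbO : O b := ⟨hbK, fun m hm h => hbP ⟨m, hm, h⟩⟩
      refine ⟨hbO, fun m hm hA => haA m hm ?_⟩
      obtain ⟨u', hu', hr, hadj'⟩ := hA
      have hQab : Q.Adj a b := ⟨hab, haO, hbO⟩
      exact ⟨u', hu', hQab.reachable.trans hr, hadj'⟩

theorem insert_conn {V : Type*} (G : SimpleGraph V) (K : Set V) (z c : V) (hc : c ∈ K)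
    (hzc : G.Adj z c) (hK : (G.induce K).Connected) : (G.induce (insert z K)).Connected := by
  rw [SimpleGraph.connected_iff_exists_forall_reachable]
  refine ⟨⟨c, Or.inr hc⟩, ?_⟩
  rintro ⟨u, hu⟩
  rcases hu with rfl | hu
  · have : (G.induce (insert u K)).Adj ⟨c, Or.inr hc⟩ ⟨u, Or.inl rfl⟩ := hzc.symm
    exact this.reachable
  · exact (hK.preconnected ⟨c, hc⟩ ⟨u, hu⟩).map
      (G.induceHomOfLE (Set.subset_insert z K)).toHom

theorem init_aux {V : Type*} [Fintype V] (G : SimpleGraph V)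
    (hconn : IsKConnected G 3) (x y v : V) (hxy : G.Adj x y) (hvx : v ≠ x) (hvy : v ≠ y) :
    (delJ G x y {v}).Reachable x y := by
  classical
  obtain ⟨t, ht⟩ : ∃ t, t ∉ ({v, x, y} : Finset V) := by
    by_contra! h
    have h1 : Fintype.card V ≤ ({v, x, y} : Finset V).card :=
      Finset.card_le_card (fun a _ => h a)
    have h2 : ({v, x, y} : Finset V).card ≤ 3 := Finset.card_le_three
    have := hconn.1
    omega
  simp only [Finset.mem_insert, Finset.mem_singleton, not_or] at ht
  obtain ⟨a, u, rfl, huy, hau, -, -, huv, hux⟩ := sep_aux G hconn v x y t {y} hvy.symm hxy.ne.symm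
    ht.1 ht.2.1 rfl ht.2.2
  have hlast : (delJ G x a {v}).Adj u a := by
    refine ⟨hau.symm, huv, hvy.symm, fun h => ?_⟩
    rcases Sym2.eq_iff.1 h with h | h
    · exact hux h.1
    · exact huy h.1
  refine SimpleGraph.Reachable.trans ?_ hlast.reachable
  by_contra hnot
  obtain ⟨p, q, hp, hq, hpq, hpv, hpa, hqv, hqa⟩ := sep_aux G hconn v a x u
    {w | (delJ G x a {v}).Reachable x w} hvx.symm hxy.ne huv huy
    (SimpleGraph.Reachable.refl _) hnot
  apply hq
  have : (delJ G x a {v}).Adj p q := by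
    refine ⟨hpq, hpv, hqv, fun h => ?_⟩
    rcases Sym2.eq_iff.1 h with h | h
    · exact hqa h.2
    · exact hpa h.1
  exact SimpleGraph.Reachable.trans hp this.reachable

theorem stmt16 {V : Type*} [Fintype V] (G : SimpleGraph V)
    (hconn : IsKConnected G 3) (e : Sym2 V) (he : e ∈ G.edgeSet)
    (v : V) (hv : v ∉ e) :
    ∃ (a : V) (C : G.Walk a a), C.IsCycle ∧ v ∉ C.support ∧ e ∈ C.edges ∧
      (∀ x ∈ C.support, ∀ y ∈ C.support, G.Adj x y → s(x, y) ∈ C.edges) ∧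
      (G.induce {u : V | u ∉ C.support}).Connected := by
  classical
  induction e using Sym2.ind with
  | _ x y =>
  have hxy : G.Adj x y := he
  simp only [Sym2.mem_iff, not_or] at hv
  let F : Set V → Prop := fun K => v ∈ K ∧ x ∉ K ∧ y ∉ K ∧ (G.induce K).Connected ∧
    (delJ G x y K).Reachable x y
  have hF0 : F {v} := by
    refine ⟨rfl, fun h => hv.1 h.symm, fun h => hv.2 h.symm, ?_, init_aux G hconn x y v hxy hv.1 hv.2⟩
    exact SimpleGraph.Connected.of_subsingleton
  obtain ⟨K, hFK, hKmax⟩ := (Set.toFinite {K | F K}).exists_maximal ⟨{v}, hF0⟩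
  obtain ⟨hvK, hxK, hyK, hKc, hr⟩ := hFK
  obtain ⟨P, hPp, hPd⟩ := hr.exists_path_of_dist
  have hPK : ∀ k, k ≤ P.length → P.getVert k ∉ K := by
    intro k hk
    rcases Nat.lt_or_ge k P.length with h | h
    · exact (P.adj_getVert_succ h).2.1
    · rw [P.getVert_of_length_le h]; exact hyK
  have hch : ∀ k m, k < m → m ≤ P.length → (delJ G x y K).Adj (P.getVert k) (P.getVert m) →
      m = k + 1 := by
    intro k m hkm hm h
    have := SimpleGraph.dist_le ((P.take k).append (SimpleGraph.Walk.cons h (P.drop m)))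
    rw [SimpleGraph.Walk.length_append, SimpleGraph.Walk.length_cons,
      SimpleGraph.Walk.take_length, SimpleGraph.Walk.drop_length] at this
    omega
  have hcov := cover_aux G hconn x y v K hvK P.getVert P.length
    (by
      rcases Nat.eq_zero_or_pos P.length with h | h
      · exact absurd (SimpleGraph.Walk.eq_of_length_eq_zero h) hxy.ne
      · exact h)
    P.getVert_zero P.getVert_length
    (fun i j hi hj h => hPp.getVert_injOn hi hj h) hPK
    (fun k hk => P.adj_getVert_succ hk) hch
    (by
      intro z c hz hzx hzy hc hzc hreach
      have : F (insert z K) := ⟨Or.inr hvK, by simp [hxK, hzx.symm], by simp [hyK, hzy.symm],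
        insert_conn G K z c hc hzc hKc, hreach⟩
      exact hz (hKmax this (Set.subset_insert z K) (Set.mem_insert z K)))
  have hsup : ∀ u, u ∈ P.support ↔ u ∉ K := by
    intro u
    rw [SimpleGraph.Walk.mem_support_iff_exists_getVert]
    constructor
    · rintro ⟨k, rfl, hk⟩
      exact hPK k hk
    · intro hu
      obtain ⟨k, hk, rfl⟩ := hcov u hu
      exact ⟨k, rfl, hk⟩
  have hle : delJ G x y K ≤ G := fun a b h => h.1
  have hCs : ∀ u, u ∈ (SimpleGraph.Walk.cons hxy.symm (P.mapLe hle)).support ↔ u ∉ K := by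
    intro u
    rw [SimpleGraph.Walk.support_cons, SimpleGraph.Walk.support_mapLe_eq_support, List.mem_cons,
      hsup]
    constructor
    · rintro (rfl | h)
      · exact hyK
      · exact h
    · exact Or.inr
  have hedge : ∀ k m, k < m → m ≤ P.length → (delJ G x y K).Adj (P.getVert k) (P.getVert m) →
      s(P.getVert k, P.getVert m) ∈ P.edges := by
    intro k m hkm hm h
    obtain rfl := hch k m hkm hm h
    have hk : k < P.edges.length := by rw [SimpleGraph.Walk.length_edges]; omega
    have h1 : P.edges[k] = s(P.getVert k, P.getVert (k + 1)) := SimpleGraph.Walk.getElem_edges hk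
    rw [← h1]
    exact List.getElem_mem hk
  refine ⟨y, SimpleGraph.Walk.cons hxy.symm (P.mapLe hle), ?_, ?_, ?_, ?_, ?_⟩
  · rw [SimpleGraph.Walk.cons_isCycle_iff]
    refine ⟨hPp.mapLe hle, ?_⟩
    rw [SimpleGraph.Walk.edges_mapLe_eq_edges]
    intro h
    have : (delJ G x y K).Adj y x := P.adj_of_mem_edges h
    exact this.2.2.2 Sym2.eq_swap
  · rw [hCs]; exact not_not.2 hvK
  · rw [SimpleGraph.Walk.edges_cons, Sym2.eq_swap]; exact List.mem_cons_self
  · intro a ha b hb hab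
    rw [hCs] at ha hb
    rw [SimpleGraph.Walk.edges_cons, SimpleGraph.Walk.edges_mapLe_eq_edges, List.mem_cons]
    by_cases hE : s(a, b) = s(x, y)
    · left; rw [hE, Sym2.eq_swap]
    right
    have hJ : (delJ G x y K).Adj a b := ⟨hab, ha, hb, hE⟩
    obtain ⟨k, hk, rfl⟩ := hcov a ha
    obtain ⟨m, hm, rfl⟩ := hcov b hb
    rcases lt_trichotomy k m with h | h | h
    · exact hedge k m h hm hJ
    · exact absurd (by rw [h]) hab.ne
    · rw [Sym2.eq_swap]; exact hedge m k h hk hJ.symm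
  · have : {u : V | u ∉ (SimpleGraph.Walk.cons hxy.symm (P.mapLe hle)).support} = K := by
      ext u
      rw [Set.mem_ofPred_eq, hCs, not_not]
    rw [this]
    exact hKc
end

section
/- Let G be a connected Eulerian simple graph (connected, all degrees even) with at least 3 vertices. Then there exist two adjacent vertices w and u such that both G − w and G − {w, u} are connected. -/
/-- In a connected Eulerian graph with at least 3 vertices there are adjacent vertices
`w, u` such that both `G - w` and `G - {w, u}` are connected. -/
theorem stmt18 {V : Type*} [Fintype V] (G : SimpleGraph V)
    (hconn : G.Connected) (heul : ∀ v : V, Even (G.neighborSet v).ncard)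
    (hcard : 3 ≤ Fintype.card V) :
    ∃ w u : V, G.Adj w u ∧ (G.induce {x : V | x ≠ w}).Connected ∧
      (G.induce {x : V | x ≠ w ∧ x ≠ u}).Connected := by
  classical
  have hnt : Nontrivial V := Fintype.one_lt_card_iff_nontrivial.mp (by omega)
  -- every vertex has a neighbour outside any given vertex
  have hdeg : ∀ v a : V, ∃ b, G.Adj v b ∧ b ≠ a := by
    intro v a
    by_contra! hcon
    obtain ⟨b, hb⟩ := hconn.preconnected.exists_adj_of_nontrivial v
    have hba := hcon b hb
    subst hba
    have : G.neighborSet v = {b} := by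
      ext c
      simp only [SimpleGraph.mem_neighborSet, Set.mem_singleton_iff]
      exact ⟨hcon c, fun h => h ▸ hb⟩
    have h2 := heul v
    rw [this, Set.ncard_singleton] at h2
    exact absurd h2 (by decide)
  -- a longest path
  obtain ⟨w, v, p, hp, hmax⟩ : ∃ (w v : V) (p : G.Walk w v), p.IsPath ∧
      ∀ (a b : V) (q : G.Walk a b), q.IsPath → q.length ≤ p.length := by
    let P : ℕ → Prop := fun n => ∃ (w v : V) (p : G.Walk w v), p.IsPath ∧ p.length = n
    have hP0 : P 0 := ⟨Classical.arbitrary V, _, SimpleGraph.Walk.nil, by simp, by simp⟩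
    have hb : ∀ n, P n → n ≤ Fintype.card V := by
      rintro n ⟨w, v, p, hp, rfl⟩
      exact hp.length_lt.le
    obtain ⟨w, v, p, hp, hl⟩ := Nat.findGreatest_spec (P := P) (Nat.zero_le (Fintype.card V)) hP0
    refine ⟨w, v, p, hp, fun a b q hq => ?_⟩
    rw [hl]
    exact Nat.le_findGreatest (hb _ ⟨a, b, q, hq, rfl⟩) ⟨a, b, q, hq, rfl⟩
  have hN : ∀ b, G.Adj w b → b ∈ p.support := by
    intro b hb
    by_contra hbp
    have := hmax _ _ (SimpleGraph.Walk.cons hb.symm p) (hp.cons hbp)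
    simp at this
  cases p with
  | nil =>
    obtain ⟨b, hb, hne⟩ := hdeg w w
    have := hN b hb
    simp at this
    exact absurd this hne
  | @cons _ u _ hwu q =>
  cases q with
  | nil =>
    obtain ⟨b, hb, hne⟩ := hdeg w v
    have := hN b hb
    simp at this
    rcases this with h | h
    · exact absurd h hb.ne'
    · exact absurd h hne
  | @cons _ x _ hux q =>
  have hp1 := hp
  rw [SimpleGraph.Walk.cons_isPath_iff, SimpleGraph.Walk.cons_isPath_iff] at hp1
  obtain ⟨⟨hq, huq⟩, hwq⟩ := hp1
  simp only [SimpleGraph.Walk.support_cons, List.mem_cons, not_or] at hwq hN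
  have hqT : ∀ a ∈ q.support, a ∈ {x : V | x ≠ w ∧ x ≠ u} := by
    intro a ha
    exact ⟨fun h => hwq.2 (h ▸ ha), fun h => huq (h ▸ ha)⟩
  have hxT := hqT x q.start_mem_support
  let A : Set V := {a | ∃ h : a ∈ {x : V | x ≠ w ∧ x ≠ u},
    (G.induce {x : V | x ≠ w ∧ x ≠ u}).Reachable ⟨x, hxT⟩ ⟨a, h⟩}
  have hqA : ∀ a ∈ q.support, a ∈ A := by
    intro a ha
    refine ⟨hqT a ha, ?_⟩
    exact ⟨(q.takeUntil a ha).induce _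
      (fun b hb => hqT b (q.support_takeUntil_subset_support ha hb))⟩
  have hAadj : ∀ a b, a ∈ A → G.Adj a b → b ≠ w → b ≠ u → b ∈ A := by
    rintro a b ⟨ha, hr⟩ hab hbw hbu
    refine ⟨⟨hbw, hbu⟩, hr.trans (SimpleGraph.Adj.reachable ?_)⟩
    simpa using hab
  have hwA : ∀ b, G.Adj w b → b = u ∨ b ∈ A := by
    intro b hb
    rcases hN b hb with h | h | h
    · exact absurd h hb.ne'
    · exact Or.inl h
    · exact Or.inr (hqA b h)
  have hall : ∀ y, y ≠ w → y ≠ u → y ∈ A := by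
    intro y hyw hyu
    by_contra hyA
    obtain ⟨W⟩ := hconn.preconnected y w
    obtain ⟨d, -, hd1, hd2⟩ := W.exists_boundary_dart {b | b ≠ w ∧ b ≠ u ∧ b ∉ A}
      ⟨hyw, hyu, hyA⟩ (by simp)
    obtain ⟨⟨b, a⟩, hba⟩ := d
    simp only [Set.mem_setOf_eq] at hd1 hd2 hba
    obtain ⟨hbw, hbu, hbA⟩ := hd1
    have key : ∀ c, G.Adj b c → c ≠ w ∧ c ∉ A := by
      intro c hc
      refine ⟨?_, fun h => hbA (hAadj c b h hc.symm hbw hbu)⟩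
      rintro rfl
      rcases hwA b hc.symm with h | h
      · exact hbu h
      · exact hbA h
    have hau : a = u := by
      by_contra h
      exact hd2 ⟨(key a hba).1, h, (key a hba).2⟩
    subst hau
    obtain ⟨c, hbc, hcu⟩ := hdeg b a
    have hc := key c hbc
    have hpath : (SimpleGraph.Walk.cons hbc.symm (SimpleGraph.Walk.cons hba
        (SimpleGraph.Walk.cons hux q))).IsPath := by
      refine ((hq.cons huq).cons ?_).cons ?_
      · simp only [SimpleGraph.Walk.support_cons, List.mem_cons, not_or]
        exact ⟨hbu, fun h => hbA (hqA b h)⟩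
      · simp only [SimpleGraph.Walk.support_cons, List.mem_cons, not_or]
        exact ⟨hbc.ne', hcu, fun h => hc.2 (hqA c h)⟩
    have := hmax _ _ _ hpath
    simp at this
  have h2 : (G.induce {x : V | x ≠ w ∧ x ≠ u}).Connected := by
    rw [SimpleGraph.connected_iff_exists_forall_reachable]
    refine ⟨⟨x, hxT⟩, ?_⟩
    rintro ⟨y, hy⟩
    exact (hall y hy.1 hy.2).2
  refine ⟨w, u, hwu, ?_, h2⟩
  rw [SimpleGraph.connected_iff_exists_forall_reachable]
  refine ⟨⟨x, hxT.1⟩, ?_⟩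
  rintro ⟨y, hy⟩
  by_cases hyu : y = u
  · subst hyu
    exact SimpleGraph.Adj.reachable (by simpa using hux.symm)
  · obtain ⟨h, hr⟩ := hall y hy hyu
    exact hr.map (SimpleGraph.induceHomOfLE G (fun a ha => ha.1)).toHom
end

section
/- Let G be a connected simple graph that is neither a cycle nor a complete graph. Then there exist two nonadjacent vertices x and y in G such that G − {x, y} is connected. -/
theorem root_lemma {W : Type*} (H : SimpleGraph W) (S : Set W) (v : W) (hv : v ∈ S) (d : W → ℕ)
    (h : ∀ w ∈ S, w ≠ v → ∃ z ∈ S, H.Adj w z ∧ d z < d w) : (H.induce S).Connected := by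
  have key : ∀ n : ℕ, ∀ w (hw : w ∈ S), d w = n → (H.induce S).Reachable ⟨w, hw⟩ ⟨v, hv⟩ := by
    intro n
    induction n using Nat.strong_induction_on with
    | _ n ih =>
      intro w hw hd
      by_cases hwv : w = v
      · subst hwv; exact SimpleGraph.Reachable.refl _
      · obtain ⟨z, hz, hadj, hlt⟩ := h w hw hwv
        have h1 := ih (d z) (hd ▸ hlt) z hz rfl
        have h2 : (H.induce S).Adj ⟨w, hw⟩ ⟨z, hz⟩ := hadj
        exact h2.reachable.trans h1
  haveI : Nonempty S := ⟨⟨v, hv⟩⟩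
  refine SimpleGraph.Connected.mk ?_
  rintro ⟨a, ha⟩ ⟨b, hb⟩
  exact (key _ a ha rfl).trans (key _ b hb rfl).symm

theorem closer {W : Type*} (H : SimpleGraph W) (hc : H.Connected) (v w : W) (hw : w ≠ v) :
    ∃ z, H.Adj w z ∧ H.dist z v < H.dist w v := by
  obtain ⟨p, hp⟩ := hc.exists_walk_length_eq_dist w v
  cases p with
  | nil => exact absurd rfl hw
  | cons hadj q =>
    refine ⟨_, hadj, ?_⟩
    have := SimpleGraph.dist_le q
    simp at hp
    omega

theorem cut_lemma {W : Type*} [Finite W] (H : SimpleGraph W) (hc : H.Connected) (v a0 : W)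
    (ha0 : a0 ≠ v) (hcut : ¬ (H.induce {w | w ≠ v}).Connected) :
    ∃ x y, x ≠ y ∧ ¬ H.Adj x y ∧ (H.induce {w | w ≠ x}).Connected ∧
      (H.induce {w | w ≠ y}).Connected ∧ (H.induce {w | w ≠ x ∧ w ≠ y}).Connected := by
  have : ∃ a b : {w | w ≠ v}, ¬ (H.induce {w | w ≠ v}).Reachable a b := by
    by_contra! hcon
    haveI : Nonempty {w | w ≠ v} := ⟨⟨a0, ha0⟩⟩
    exact hcut (SimpleGraph.Connected.mk hcon)
  obtain ⟨a, b, hab⟩ := this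
  set A : Set W := {w | ∃ h : w ≠ v, (H.induce {w | w ≠ v}).Reachable a ⟨w, h⟩} with hA
  set B : Set W := {w | w ≠ v ∧ w ∉ A} with hB
  have haA : a.1 ∈ A := ⟨a.2, SimpleGraph.Reachable.refl _⟩
  have hbB : b.1 ∈ B := ⟨b.2, fun ⟨_, h⟩ => hab h⟩
  have hAB : ∀ p ∈ A, ∀ q ∈ B, ¬ H.Adj p q := by
    rintro p ⟨hp, hr⟩ q ⟨hq, hqA⟩ hadj
    apply hqA
    refine ⟨hq, hr.trans ?_⟩
    have h2 : (H.induce {w | w ≠ v}).Adj ⟨p, hp⟩ ⟨q, hq⟩ := hadj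
    exact h2.reachable
  obtain ⟨x, hxA, hx⟩ := Set.exists_max_image A (fun w => H.dist w v) A.toFinite ⟨_, haA⟩
  obtain ⟨y, hyB, hy⟩ := Set.exists_max_image B (fun w => H.dist w v) B.toFinite ⟨_, hbB⟩
  have hxv : x ≠ v := hxA.1
  have hyv : y ≠ v := hyB.1
  have hxy : x ≠ y := fun h => hyB.2 (h ▸ hxA)
  have hclos : ∀ w, w ≠ v → ∃ z, H.Adj w z ∧ H.dist z v < H.dist w v ∧ (w ≠ x → z ≠ x ∨ w ∈ B) ∧
      z ≠ x ∧ z ≠ y := by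
    intro w hw
    obtain ⟨z, hz, hlt⟩ := closer H hc v w hw
    refine ⟨z, hz, hlt, ?_⟩
    by_cases hwA : w ∈ A
    · have h1 : z ≠ x := by rintro rfl; exact absurd (hx w hwA) (by simpa using hlt)
      have h2 : z ≠ y := by rintro rfl; exact hAB w hwA _ hyB hz
      exact ⟨fun _ => Or.inl h1, h1, h2⟩
    · have hwB : w ∈ B := ⟨hw, hwA⟩
      have h1 : z ≠ y := by rintro rfl; exact absurd (hy w hwB) (by simpa using hlt)
      have h2 : z ≠ x := by rintro rfl; exact hAB _ hxA w hwB hz.symm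
      exact ⟨fun _ => Or.inr hwB, h2, h1⟩
  refine ⟨x, y, hxy, hAB x hxA y hyB, ?_, ?_, ?_⟩
  · refine root_lemma H _ v hxv.symm (fun w => H.dist w v) ?_
    intro w _ hw
    obtain ⟨z, h1, h2, _, h3, h4⟩ := hclos w hw
    exact ⟨z, h3, h1, h2⟩
  · refine root_lemma H _ v hyv.symm (fun w => H.dist w v) ?_
    intro w _ hw
    obtain ⟨z, h1, h2, _, h3, h4⟩ := hclos w hw
    exact ⟨z, h4, h1, h2⟩
  · refine root_lemma H _ v ⟨hxv.symm, hyv.symm⟩ (fun w => H.dist w v) ?_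
    intro w _ hw
    obtain ⟨z, h1, h2, _, h3, h4⟩ := hclos w hw
    exact ⟨z, ⟨h3, h4⟩, h1, h2⟩

/-- A connected graph that is neither a cycle (i.e. not 2-regular) nor a complete graph
has two nonadjacent vertices `x, y` such that `G - {x, y}` is connected. -/
theorem stmt19 {V : Type*} [Fintype V] (G : SimpleGraph V)
    (hconn : G.Connected)
    (hcycle : ¬ (∀ v : V, (G.neighborSet v).ncard = 2))
    (hcomplete : ¬ (∀ x y : V, x ≠ y → G.Adj x y)) :
    ∃ x y : V, x ≠ y ∧ ¬ G.Adj x y ∧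
      (G.induce {v : V | v ≠ x ∧ v ≠ y}).Connected := by
  push Not at hcomplete
  obtain ⟨p, q, hpq, hnpq⟩ := hcomplete
  haveI : Nontrivial V := ⟨p, q, hpq⟩
  by_cases hcut : ∃ v, ¬ (G.induce {w | w ≠ v}).Connected
  · obtain ⟨v, hv⟩ := hcut
    obtain ⟨a0, ha0⟩ := exists_ne v
    obtain ⟨x, y, h1, h2, _, _, h3⟩ := cut_lemma G hconn v a0 ha0 hv
    exact ⟨x, y, h1, h2, h3⟩
  push Not at hcut hcycle
  obtain ⟨u, hu⟩ := hcycle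
  -- degree at least 3
  have hdeg : 3 ≤ (G.neighborSet u).ncard := by
    by_contra hlt
    have hle : (G.neighborSet u).ncard ≤ 1 := by omega
    obtain ⟨w, hw, _⟩ := closer G hconn (exists_ne u).choose u (exists_ne u).choose_spec.symm
    have huniq : ∀ z, G.Adj u z → z = w := fun z hz =>
      (Set.ncard_le_one (Set.toFinite _)).1 hle z hz w hw
    -- third vertex
    have h3 : ∃ t, t ≠ u ∧ t ≠ w := by
      by_contra! hcon
      have hp : p = u ∨ p = w := by by_cases h : p = u; exact Or.inl h; exact Or.inr (hcon p h)
      have hq : q = u ∨ q = w := by by_cases h : q = u; exact Or.inl h; exact Or.inr (hcon q h)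
      have := hw.symm
      rcases hp with rfl | rfl <;> rcases hq with rfl | rfl <;> simp_all
    obtain ⟨t, htu, htw⟩ := h3
    obtain ⟨z, hz, _⟩ := closer _ (hcut w) ⟨t, htw⟩ ⟨u, hw.ne⟩ (by simpa using htu.symm)
    exact z.2 (huniq z.1 hz)
  by_cases huniv : ∀ z, z ≠ u → G.Adj z u
  · have hpu : u ≠ p := by rintro rfl; exact hnpq (huniv q hpq.symm).symm
    have hqu : u ≠ q := by rintro rfl; exact hnpq (huniv p hpq)
    classical
    refine ⟨p, q, hpq, hnpq, root_lemma G _ u ⟨hpu, hqu⟩ (fun w => if w = u then 0 else 1) ?_⟩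
    intro w _ hw
    exact ⟨u, ⟨hpu, hqu⟩, huniv w hw, by simp [hw]⟩
  push Not at huniv
  obtain ⟨v, hvu, hnvu⟩ := huniv
  by_cases hex : ∃ y : {w | w ≠ u}, ¬ G.Adj y.1 u ∧
      ((G.induce {w | w ≠ u}).induce {w | w ≠ y}).Connected
  · obtain ⟨y, hy, hyc⟩ := hex
    refine ⟨y.1, u, y.2, hy, ?_⟩
    let f : ((G.induce {w | w ≠ u}).induce {w | w ≠ y}) →g
        G.induce {w | w ≠ y.1 ∧ w ≠ u} :=
      ⟨fun w => ⟨w.1.1, fun h => w.2 (Subtype.ext h), w.1.2⟩, fun h => h⟩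
    haveI : Nonempty {w | w ≠ y.1 ∧ w ≠ u} := hyc.nonempty.map f
    refine SimpleGraph.Connected.mk ?_
    rintro ⟨a, ha, ha'⟩ ⟨b, hb, hb'⟩
    exact (hyc.preconnected ⟨⟨a, ha'⟩, fun h => ha (congrArg Subtype.val h)⟩
      ⟨⟨b, hb'⟩, fun h => hb (congrArg Subtype.val h)⟩).map f
  push Not at hex
  have hadju : ∃ t, G.Adj u t := by
    have : (G.neighborSet u).Nonempty := by
      rw [← Set.ncard_pos (Set.toFinite _)]; omega
    exact this
  obtain ⟨t, ht⟩ := hadju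
  have htv : t ≠ v := by rintro rfl; exact hnvu ht.symm
  obtain ⟨x, y, hxy, hnxy, hxc, hyc, hc⟩ := cut_lemma (G.induce {w | w ≠ u}) (hcut u) ⟨v, hvu⟩
    ⟨t, ht.ne'⟩ (by simpa using htv) (hex ⟨v, hvu⟩ hnvu)
  have hs : ∃ s, G.Adj u s ∧ s ≠ x.1 ∧ s ≠ y.1 := by
    by_contra! hcon
    have hsub : G.neighborSet u ⊆ {x.1, y.1} := by
      intro s hs
      by_cases h : s = x.1
      · exact Or.inl h
      · exact Or.inr (hcon s hs h)
    have h1 := Set.ncard_le_ncard hsub (Set.toFinite _)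
    have h2 := Set.ncard_insert_le x.1 {y.1}
    rw [Set.ncard_singleton] at h2
    omega
  obtain ⟨s, hus, hsx, hsy⟩ := hs
  refine ⟨x.1, y.1, fun h => hxy (Subtype.ext h), hnxy, ?_⟩
  let f : ((G.induce {w | w ≠ u}).induce {w | w ≠ x ∧ w ≠ y}) →g
      G.induce {w | w ≠ x.1 ∧ w ≠ y.1} :=
    ⟨fun w => ⟨w.1.1, fun h => w.2.1 (Subtype.ext h), fun h => w.2.2 (Subtype.ext h)⟩, fun h => h⟩
  have key : ∀ a : {w | w ≠ x.1 ∧ w ≠ y.1},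
      (G.induce {w | w ≠ x.1 ∧ w ≠ y.1}).Reachable a ⟨s, hsx, hsy⟩ := by
    rintro ⟨a, ha, ha'⟩
    by_cases hau : a = u
    · subst hau
      have : (G.induce {w | w ≠ x.1 ∧ w ≠ y.1}).Adj ⟨a, ha, ha'⟩ ⟨s, hsx, hsy⟩ := hus
      exact this.reachable
    · exact (hc.preconnected
        ⟨⟨a, hau⟩, fun h => ha (congrArg Subtype.val h), fun h => ha' (congrArg Subtype.val h)⟩
        ⟨⟨s, hus.ne'⟩, fun h => hsx (congrArg Subtype.val h),
          fun h => hsy (congrArg Subtype.val h)⟩).map f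
  haveI : Nonempty {w | w ≠ x.1 ∧ w ≠ y.1} := ⟨⟨s, hsx, hsy⟩⟩
  exact SimpleGraph.Connected.mk fun a b => (key a).trans (key b).symm
end
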